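/- arXiv:2512.17265 — 2 statements merged into one kernel-verified Lean document; each statement's English description precedes it below -/
import Mathlib

section
/- Let M₁, M₂, M₃ be finite MDPs with the same discount factor γ ∈ [0,1) and rewards in [0,R̄], and let d^{1-2}, d^{1-3}, d^{3-2} be the pairwise GBSMs (each the pointwise supremum of the iterates of the corresponding GBSM operator from the zero function). Then for all s ∈ S₁, s' ∈ S₂, s'' ∈ S₃: d^{1-2}(s,s') ≤ d^{1-3}(s,s'') + d^{3-2}(s'',s'). -/
open scoped BigOperators

noncomputable section

/-- The (finite, linear-programming) 1-Wasserstein distance between probability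
vectors `P` on `S₁` and `Q` on `S₂` with cost function `d`. -/
def W1 {S₁ S₂ : Type*} [Fintype S₁] [Fintype S₂]
    (P : S₁ → ℝ) (Q : S₂ → ℝ) (d : S₁ → S₂ → ℝ) : ℝ :=
  sInf { c : ℝ | ∃ lam : S₁ → S₂ → ℝ,
    (∀ i j, 0 ≤ lam i j) ∧ (∀ i, ∑ j, lam i j = P i) ∧
    (∀ j, ∑ i, lam i j = Q j) ∧ c = ∑ i, ∑ j, lam i j * d i j }

/-- A finite Markov decision process (without its discount factor). -/
structure FinMDP (S A : Type*) [Fintype S] [Fintype A] where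
  P : S → A → S → ℝ
  R : S → A → ℝ
  P_nonneg : ∀ s a s', 0 ≤ P s a s'
  P_sum : ∀ s a, ∑ s', P s a s' = 1

variable {S₁ A₁ S₂ A₂ : Type*} [Fintype S₁] [Fintype A₁] [Fintype S₂] [Fintype A₂]

/-- `δ(d)((s,a),(s',a')) = |R₁(s,a) − R₂(s',a')| + γ·W₁(P₁(·|s,a), P₂(·|s',a'); d)` -/
def gbsmDelta (M₁ : FinMDP S₁ A₁) (M₂ : FinMDP S₂ A₂) (γ : ℝ)
    (d : S₁ → S₂ → ℝ) (s : S₁) (a : A₁) (s' : S₂) (a' : A₂) : ℝ :=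
  |M₁.R s a - M₂.R s' a'| + γ * W1 (M₁.P s a) (M₂.P s' a') d

/-- The GBSM operator `F(d)(s,s') = H(X_s, X_{s'}; δ(d))` where `H` is the Hausdorff
metric between the finite sets `X_s = {(s,a)}`, `X_{s'} = {(s',a')}`. -/
def gbsmF (M₁ : FinMDP S₁ A₁) (M₂ : FinMDP S₂ A₂) (γ : ℝ)
    (d : S₁ → S₂ → ℝ) : S₁ → S₂ → ℝ :=
  fun s s' =>
    max (⨆ a : A₁, ⨅ a' : A₂, gbsmDelta M₁ M₂ γ d s a s' a')
        (⨅ a : A₁, ⨆ a' : A₂, gbsmDelta M₁ M₂ γ d s a s' a')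

/-- The GBSM: pointwise supremum of the iterates of `gbsmF` from the zero function. -/
def gbsm (M₁ : FinMDP S₁ A₁) (M₂ : FinMDP S₂ A₂) (γ : ℝ) : S₁ → S₂ → ℝ :=
  fun s s' => ⨆ n : ℕ, (gbsmF M₁ M₂ γ)^[n] (fun _ _ => 0) s s'

/-! Gluing couplings along their common marginal makes the Wasserstein distance inherit a triangle
inequality `d ≤ e + f` between cost functions, and so do `δ` and the min-max quantity `H`. Hence
the triangle inequality passes from one triple of iterates of the GBSM operators to the next. It
survives the supremum because the iterates are bounded: on finite MDPs the reward gaps have a common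
bound `C`, and `C / (1 - γ)` is a fixed point of `K ↦ C + γ * K`. -/

section Coupling

variable {X Y Z : Type*} [Fintype X] [Fintype Y] [Fintype Z]

/-- `lam` is a coupling of `P` and `Q`, i.e. a feasible transport plan in the linear program
defining `W1 P Q`. The total masses of `P` and `Q` are not required to be `1`. -/
structure IsCoupling (P : X → ℝ) (Q : Y → ℝ) (lam : X → Y → ℝ) : Prop where
  nonneg : ∀ i j, 0 ≤ lam i j
  sum_right : ∀ i, ∑ j, lam i j = P i
  sum_left : ∀ j, ∑ i, lam i j = Q j

/-- The cost of the transport plan `lam` under the cost function `d`: the objective of the linear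
program defining `W1`. -/
def transportCost (lam d : X → Y → ℝ) : ℝ :=
  ∑ i, ∑ j, lam i j * d i j

/-- The gluing of couplings `l` of `(P, T)` and `m` of `(T, Q)` to a joint distribution on
`X × Z × Y`, under which the outer coordinates are conditionally independent given the middle one.
Where `T k = 0` the division returns `0`, which is right because `l` and `m` vanish there too. -/
def gluing {X Y Z : Type*} (T : Z → ℝ) (l : X → Z → ℝ) (m : Z → Y → ℝ)
    (i : X) (k : Z) (j : Y) : ℝ :=
  l i k * m k j / T k

namespace IsCoupling

variable {P : X → ℝ} {Q : Y → ℝ} {T : Z → ℝ} {lam : X → Y → ℝ} {l : X → Z → ℝ} {m : Z → Y → ℝ}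

theorem le_left (h : IsCoupling P Q lam) (i : X) (j : Y) : lam i j ≤ P i :=
  h.sum_right i ▸ Finset.single_le_sum (fun j _ => h.nonneg i j) (Finset.mem_univ j)

theorem le_right (h : IsCoupling P Q lam) (i : X) (j : Y) : lam i j ≤ Q j :=
  h.sum_left j ▸
    Finset.single_le_sum (f := fun i => lam i j) (fun i _ => h.nonneg i j) (Finset.mem_univ i)

theorem right_nonneg (h : IsCoupling P Q lam) (j : Y) : 0 ≤ Q j :=
  h.sum_left j ▸ Finset.sum_nonneg fun i _ => h.nonneg i j

theorem mul_of_mem_stdSimplex (hP : P ∈ stdSimplex ℝ X) (hQ : Q ∈ stdSimplex ℝ Y) :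
    IsCoupling P Q fun i j => P i * Q j where
  nonneg i j := mul_nonneg (hP.1 i) (hQ.1 j)
  sum_right i := by rw [← Finset.mul_sum, hQ.2, mul_one]
  sum_left j := by rw [← Finset.sum_mul, hP.2, one_mul]

theorem gluing_nonneg (hl : IsCoupling P T l) (hm : IsCoupling T Q m) (i : X) (k : Z) (j : Y) :
    0 ≤ gluing T l m i k j :=
  div_nonneg (mul_nonneg (hl.nonneg i k) (hm.nonneg k j)) (hl.right_nonneg k)

theorem sum_gluing_right (hl : IsCoupling P T l) (hm : IsCoupling T Q m) (i : X) (k : Z) :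
    ∑ j, gluing T l m i k j = l i k := by
  have l_eq_zero (hk : T k = 0) : l i k = 0 := le_antisymm (hk ▸ hl.le_right i k) (hl.nonneg i k)
  simp only [gluing]
  rw [← Finset.sum_div, ← Finset.mul_sum, hm.sum_right, mul_div_cancel_of_imp l_eq_zero]

theorem sum_gluing_left (hl : IsCoupling P T l) (hm : IsCoupling T Q m) (k : Z) (j : Y) :
    ∑ i, gluing T l m i k j = m k j := by
  have m_eq_zero (hk : T k = 0) : m k j = 0 := le_antisymm (hk ▸ hm.le_left k j) (hm.nonneg k j)
  simp only [gluing]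
  rw [← Finset.sum_div, ← Finset.sum_mul, hl.sum_left, mul_div_cancel_left_of_imp m_eq_zero]

theorem sum_gluing (hl : IsCoupling P T l) (hm : IsCoupling T Q m) :
    IsCoupling P Q fun i j => ∑ k, gluing T l m i k j where
  nonneg i j := Finset.sum_nonneg fun k _ => hl.gluing_nonneg hm i k j
  sum_right i := by
    rw [Finset.sum_comm]
    simp only [hl.sum_gluing_right hm, hl.sum_right]
  sum_left j := by
    rw [Finset.sum_comm]
    simp only [hl.sum_gluing_left hm, hm.sum_left]

theorem transportCost_sum_gluing_le {d : X → Y → ℝ} {e : X → Z → ℝ} {f : Z → Y → ℝ}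
    (hl : IsCoupling P T l) (hm : IsCoupling T Q m) (hdef : ∀ i k j, d i j ≤ e i k + f k j) :
    transportCost (fun i j => ∑ k, gluing T l m i k j) d ≤
      transportCost l e + transportCost m f := by
  set g := gluing T l m
  have cost_left : ∑ i, ∑ j, ∑ k, g i k j * e i k = transportCost l e := by
    refine Finset.sum_congr rfl fun i _ => ?_
    rw [Finset.sum_comm]
    simp only [← Finset.sum_mul, g, hl.sum_gluing_right hm]
  have cost_right : ∑ i, ∑ j, ∑ k, g i k j * f k j = transportCost m f := by
    rw [Finset.sum_comm, transportCost, Finset.sum_comm (f := fun k j => m k j * f k j)]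
    refine Finset.sum_congr rfl fun j _ => ?_
    rw [Finset.sum_comm]
    simp only [← Finset.sum_mul, g, hl.sum_gluing_left hm]
  calc transportCost (fun i j => ∑ k, g i k j) d
      = ∑ i, ∑ j, ∑ k, g i k j * d i j := by simp only [transportCost, Finset.sum_mul]
    _ ≤ ∑ i, ∑ j, ∑ k, g i k j * (e i k + f k j) := by
        gcongr with i _ j _ k _
        · exact hl.gluing_nonneg hm i k j
        · exact hdef i k j
    _ = transportCost l e + transportCost m f := by
        simp only [mul_add, Finset.sum_add_distrib, cost_left, cost_right]

end IsCoupling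

section Wasserstein

variable {P : X → ℝ} {Q : Y → ℝ} {T : Z → ℝ} {d : X → Y → ℝ}

theorem IsCoupling.W1_le_transportCost {lam : X → Y → ℝ} (h : IsCoupling P Q lam) :
    W1 P Q d ≤ transportCost lam d := by
  refine csInf_le ⟨∑ i, ∑ j, -(P i * |d i j|), ?_⟩
    ⟨lam, h.nonneg, h.sum_right, h.sum_left, rfl⟩
  rintro _ ⟨l, l_nonneg, l_right, l_left, rfl⟩
  have hl : IsCoupling P Q l := ⟨l_nonneg, l_right, l_left⟩
  gcongr with i _ j _
  calc -(P i * |d i j|) ≤ -(l i j * |d i j|) := by gcongr; exact hl.le_left i j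
    _ = l i j * -|d i j| := by ring
    _ ≤ l i j * d i j := mul_le_mul_of_nonneg_left (neg_abs_le _) (l_nonneg i j)

theorem le_W1 {b : ℝ} (hPQ : ∃ lam, IsCoupling P Q lam)
    (hb : ∀ lam, IsCoupling P Q lam → b ≤ transportCost lam d) : b ≤ W1 P Q d := by
  obtain ⟨lam, h⟩ := hPQ
  refine le_csInf ⟨_, lam, h.nonneg, h.sum_right, h.sum_left, rfl⟩ ?_
  rintro _ ⟨l, l_nonneg, l_right, l_left, rfl⟩
  exact hb l ⟨l_nonneg, l_right, l_left⟩

theorem W1_le_of_forall_le {C : ℝ} (hP : P ∈ stdSimplex ℝ X) (hQ : Q ∈ stdSimplex ℝ Y)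
    (hd : ∀ i j, d i j ≤ C) : W1 P Q d ≤ C :=
  calc W1 P Q d ≤ ∑ i, ∑ j, P i * Q j * d i j :=
        (IsCoupling.mul_of_mem_stdSimplex hP hQ).W1_le_transportCost
    _ ≤ ∑ i, ∑ j, P i * Q j * C := by
        gcongr with i _ j _
        · exact mul_nonneg (hP.1 i) (hQ.1 j)
        · exact hd i j
    _ = C := by simp only [← Finset.sum_mul, ← Finset.mul_sum, hP.2, hQ.2, one_mul]

theorem W1_triangle {e : X → Z → ℝ} {f : Z → Y → ℝ} (hPT : ∃ l, IsCoupling P T l)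
    (hTQ : ∃ m, IsCoupling T Q m) (hdef : ∀ i k j, d i j ≤ e i k + f k j) :
    W1 P Q d ≤ W1 P T e + W1 T Q f := by
  rw [← sub_le_iff_le_add]
  refine le_W1 hPT fun l hl => ?_
  rw [sub_le_comm]
  refine le_W1 hTQ fun m hm => ?_
  rw [sub_le_iff_le_add']
  exact (hl.sum_gluing hm).W1_le_transportCost.trans (hl.transportCost_sum_gluing_le hm hdef)

end Wasserstein

end Coupling

section Hausdorff

variable {X Y Z : Type*} [Finite X] [Finite Y] [Nonempty X] [Nonempty Y]

/-- The quantity `H(X, Y; c)` through which the GBSM operator compares actions. Its second term is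
the paper's `min_x max_y`, not the `max_y min_x` of the usual Hausdorff distance. -/
def hausdorff {X Y : Type*} (c : X → Y → ℝ) : ℝ :=
  max (⨆ x, ⨅ y, c x y) (⨅ x, ⨆ y, c x y)

theorem ciInf_le_iff_exists_le_of_finite {ι α : Type*} [ConditionallyCompleteLinearOrder α]
    [Finite ι] [Nonempty ι] {f : ι → α} {b : α} : ⨅ i, f i ≤ b ↔ ∃ i, f i ≤ b := by
  refine ⟨fun h => ?_, fun ⟨i, hi⟩ => ciInf_le_of_le (Finite.bddBelow_range f) i hi⟩
  obtain ⟨i, hi⟩ := exists_eq_ciInf_of_finite (f := f)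
  exact ⟨i, hi ▸ h⟩

theorem hausdorff_le_iff {c : X → Y → ℝ} {b : ℝ} :
    hausdorff c ≤ b ↔ (∀ x, ∃ y, c x y ≤ b) ∧ ∃ x, ∀ y, c x y ≤ b := by
  simp only [hausdorff, max_le_iff, ciSup_le_iff (Finite.bddAbove_range _),
    ciInf_le_iff_exists_le_of_finite]

theorem hausdorff_le_of_forall_le {c : X → Y → ℝ} {b : ℝ} (hc : ∀ x y, c x y ≤ b) :
    hausdorff c ≤ b :=
  hausdorff_le_iff.2
    ⟨fun x => ⟨Classical.arbitrary Y, hc x _⟩, Classical.arbitrary X, hc _⟩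

theorem hausdorff_triangle [Finite Z] [Nonempty Z] {c : X → Y → ℝ} {e : X → Z → ℝ}
    {f : Z → Y → ℝ} (hcef : ∀ x z y, c x y ≤ e x z + f z y) :
    hausdorff c ≤ hausdorff e + hausdorff f := by
  obtain ⟨e_near, x₀, e_center⟩ := hausdorff_le_iff.1 (le_refl (hausdorff e))
  obtain ⟨f_near, z₀, f_center⟩ := hausdorff_le_iff.1 (le_refl (hausdorff f))
  refine hausdorff_le_iff.2 ⟨fun x => ?_, x₀, fun y => ?_⟩
  · obtain ⟨z, hz⟩ := e_near x
    obtain ⟨y, hy⟩ := f_near z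
    exact ⟨y, (hcef x z y).trans (add_le_add hz hy)⟩
  · exact (hcef x₀ z₀ y).trans (add_le_add (e_center z₀) (f_center y))

end Hausdorff

section GBSM

variable {S₃ A₃ : Type*} [Fintype S₃] [Fintype A₃]
  {M₁ : FinMDP S₁ A₁} {M₂ : FinMDP S₂ A₂} {M₃ : FinMDP S₃ A₃} {γ : ℝ}
  {d : S₁ → S₂ → ℝ} {e : S₁ → S₃ → ℝ} {f : S₃ → S₂ → ℝ}

theorem FinMDP.P_mem_stdSimplex (M : FinMDP S₁ A₁) (s : S₁) (a : A₁) :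
    M.P s a ∈ stdSimplex ℝ S₁ :=
  ⟨M.P_nonneg s a, M.P_sum s a⟩

theorem FinMDP.exists_isCoupling_P (M₁ : FinMDP S₁ A₁) (M₂ : FinMDP S₂ A₂) (s : S₁) (a : A₁)
    (s' : S₂) (a' : A₂) : ∃ lam, IsCoupling (M₁.P s a) (M₂.P s' a') lam :=
  ⟨_, .mul_of_mem_stdSimplex (M₁.P_mem_stdSimplex s a) (M₂.P_mem_stdSimplex s' a')⟩

theorem gbsmDelta_triangle (hγ : 0 ≤ γ) (hdef : ∀ s s'' s', d s s' ≤ e s s'' + f s'' s')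
    (s : S₁) (a : A₁) (s'' : S₃) (a'' : A₃) (s' : S₂) (a' : A₂) :
    gbsmDelta M₁ M₂ γ d s a s' a' ≤
      gbsmDelta M₁ M₃ γ e s a s'' a'' + gbsmDelta M₃ M₂ γ f s'' a'' s' a' :=
  calc gbsmDelta M₁ M₂ γ d s a s' a'
      ≤ (|M₁.R s a - M₃.R s'' a''| + |M₃.R s'' a'' - M₂.R s' a'|) +
          γ * (W1 (M₁.P s a) (M₃.P s'' a'') e + W1 (M₃.P s'' a'') (M₂.P s' a') f) :=
        add_le_add (abs_sub_le _ _ _) <| mul_le_mul_of_nonneg_left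
          (W1_triangle (M₁.exists_isCoupling_P M₃ s a s'' a'')
            (M₃.exists_isCoupling_P M₂ s'' a'' s' a') hdef) hγ
    _ = _ := by simp only [gbsmDelta]; ring

theorem gbsmF_triangle [Nonempty A₁] [Nonempty A₂] [Nonempty A₃] (hγ : 0 ≤ γ)
    (hdef : ∀ s s'' s', d s s' ≤ e s s'' + f s'' s') (s : S₁) (s'' : S₃) (s' : S₂) :
    gbsmF M₁ M₂ γ d s s' ≤ gbsmF M₁ M₃ γ e s s'' + gbsmF M₃ M₂ γ f s'' s' :=
  hausdorff_triangle fun a a'' a' => gbsmDelta_triangle hγ hdef s a s'' a'' s' a'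

theorem gbsmF_le [Nonempty A₁] [Nonempty A₂] {C K : ℝ} (hγ : 0 ≤ γ)
    (hC : ∀ s a s' a', |M₁.R s a - M₂.R s' a'| ≤ C) (hK : ∀ s s', d s s' ≤ K)
    (s : S₁) (s' : S₂) : gbsmF M₁ M₂ γ d s s' ≤ C + γ * K :=
  hausdorff_le_of_forall_le fun a a' => add_le_add (hC s a s' a') <|
    mul_le_mul_of_nonneg_left
      (W1_le_of_forall_le (M₁.P_mem_stdSimplex s a) (M₂.P_mem_stdSimplex s' a') hK) hγ

/-- The `n`-th iterate `d_n` of the GBSM operator from the zero function; the GBSM is by definition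
the pointwise supremum of these. -/
def gbsmIter (M₁ : FinMDP S₁ A₁) (M₂ : FinMDP S₂ A₂) (γ : ℝ) (n : ℕ) : S₁ → S₂ → ℝ :=
  (gbsmF M₁ M₂ γ)^[n] fun _ _ => 0

theorem gbsmIter_succ (M₁ : FinMDP S₁ A₁) (M₂ : FinMDP S₂ A₂) (γ : ℝ) (n : ℕ) :
    gbsmIter M₁ M₂ γ (n + 1) = gbsmF M₁ M₂ γ (gbsmIter M₁ M₂ γ n) :=
  Function.iterate_succ_apply' ..

theorem gbsmIter_le [Nonempty A₁] [Nonempty A₂] {C : ℝ} (hγ0 : 0 ≤ γ) (hγ1 : γ < 1)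
    (hC : ∀ s a s' a', |M₁.R s a - M₂.R s' a'| ≤ C) (n : ℕ) (s : S₁) (s' : S₂) :
    gbsmIter M₁ M₂ γ n s s' ≤ C / (1 - γ) := by
  have one_sub_pos : 0 < 1 - γ := sub_pos.2 hγ1
  induction n generalizing s s' with
  | zero =>
    have C_nonneg : 0 ≤ C :=
      (abs_nonneg _).trans (hC s (Classical.arbitrary A₁) s' (Classical.arbitrary A₂))
    exact div_nonneg C_nonneg one_sub_pos.le
  | succ n ih =>
    have fixed_point : C + γ * (C / (1 - γ)) = C / (1 - γ) := by field_simp; ring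
    rw [gbsmIter_succ, ← fixed_point]
    exact gbsmF_le hγ0 hC ih s s'

theorem gbsmIter_le_gbsm [Nonempty A₁] [Nonempty A₂] (hγ0 : 0 ≤ γ) (hγ1 : γ < 1) (n : ℕ)
    (s : S₁) (s' : S₂) : gbsmIter M₁ M₂ γ n s s' ≤ gbsm M₁ M₂ γ s s' := by
  obtain ⟨C, hC⟩ := Finite.exists_le fun x : (S₁ × A₁) × (S₂ × A₂) =>
    |M₁.R x.1.1 x.1.2 - M₂.R x.2.1 x.2.2|
  have bound (n : ℕ) : gbsmIter M₁ M₂ γ n s s' ≤ C / (1 - γ) :=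
    gbsmIter_le hγ0 hγ1 (fun s a s' a' => hC ((s, a), (s', a'))) n s s'
  exact le_ciSup (f := fun n => gbsmIter M₁ M₂ γ n s s') ⟨_, Set.forall_mem_range.2 bound⟩ n

theorem gbsmIter_triangle [Nonempty A₁] [Nonempty A₂] [Nonempty A₃] (hγ : 0 ≤ γ) (n : ℕ)
    (s : S₁) (s'' : S₃) (s' : S₂) :
    gbsmIter M₁ M₂ γ n s s' ≤ gbsmIter M₁ M₃ γ n s s'' + gbsmIter M₃ M₂ γ n s'' s' := by
  induction n generalizing s s'' s' with
  | zero => exact (add_zero (0 : ℝ)).ge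
  | succ n ih =>
    simp only [gbsmIter_succ]
    exact gbsmF_triangle hγ ih s s'' s'

theorem gbsm_triangle_general [Nonempty A₁] [Nonempty A₂] [Nonempty A₃]
    (M₁ : FinMDP S₁ A₁) (M₂ : FinMDP S₂ A₂) (M₃ : FinMDP S₃ A₃) (hγ0 : 0 ≤ γ) (hγ1 : γ < 1)
    (s : S₁) (s' : S₂) (s'' : S₃) :
    gbsm M₁ M₂ γ s s' ≤ gbsm M₁ M₃ γ s s'' + gbsm M₃ M₂ γ s'' s' :=
  ciSup_le fun n => (gbsmIter_triangle hγ0 n s s'' s').trans <|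
    add_le_add (gbsmIter_le_gbsm hγ0 hγ1 n s s'') (gbsmIter_le_gbsm hγ0 hγ1 n s'' s')

end GBSM

/-- inter-MDP triangle inequality of the GBSM. -/
theorem gbsm_triangle
    {S₃ A₃ : Type*} [Fintype S₃] [Fintype A₃]
    [Nonempty S₁] [Nonempty A₁] [Nonempty S₂] [Nonempty A₂]
    [Nonempty S₃] [Nonempty A₃]
    (M₁ : FinMDP S₁ A₁) (M₂ : FinMDP S₂ A₂) (M₃ : FinMDP S₃ A₃) (γ Rbar : ℝ)
    (hγ0 : 0 ≤ γ) (hγ1 : γ < 1) (hRbar : 0 < Rbar)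
    (hR₁ : ∀ s a, 0 ≤ M₁.R s a ∧ M₁.R s a ≤ Rbar)
    (hR₂ : ∀ s a, 0 ≤ M₂.R s a ∧ M₂.R s a ≤ Rbar)
    (hR₃ : ∀ s a, 0 ≤ M₃.R s a ∧ M₃.R s a ≤ Rbar) :
    ∀ (s : S₁) (s' : S₂) (s'' : S₃),
      gbsm M₁ M₂ γ s s' ≤ gbsm M₁ M₃ γ s s'' + gbsm M₃ M₂ γ s'' s' :=
  gbsm_triangle_general M₁ M₂ M₃ hγ0 hγ1

end
end

section
/- Under the hypotheses of the policy-transfer setting (finite MDPs M₁, M₂ with GBSM d^{1-2}, deterministic policy π on M₁, state mapping f : S₂ → S₁, action mapping g : A₁ → A₂, with V₂*, V₂^π, V₁*, V₁^π satisfying their respective Bellman equations), suppose additionally that g is greedy with respect to d^{1-2}, i.e., for every s' ∈ S₂ and a ∈ A₁, δ(d^{1-2})((f(s'),a),(s',g(a))) = min_{a'∈A₂} δ(d^{1-2})((f(s'),a),(s',a')). Then max_{s'∈S₂} |V₂*(s') − V₂^π(s')| ≤ (2/(1−γ))·max_{s'∈S₂} d^{1-2}(f(s'),s') + ((1+γ)/(1−γ))·max_{s∈S₁}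 |V₁*(s) − V₁^π(s)|. -/
open scoped BigOperators

noncomputable section

variable {S₁ A₁ S₂ A₂ : Type*} [Fintype S₁] [Fintype A₁] [Fintype S₂] [Fintype A₂]

variable [Nonempty S₁] [Nonempty A₁] [Nonempty S₂] [Nonempty A₂]

/-!
The operator `gbsmF` is monotone and contracts the sup distance by `γ`, so its iterates from `0`
increase to its fixed point, which is therefore `gbsm`. Kantorovich duality, in its easy direction,
bounds differences of action values by `gbsmDelta`; hence the largest excess `E` of
`|V₁* s - V₂* s'|` over `gbsm s s'` satisfies `E ≤ γ E`, and optimal values are `gbsm`-close.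
For the regret at `s'`, pass from `V₂*` to `V₁*`, then to `V₁^π`, then to `V₂^π`. The last step
compares the action values of `V₁^π`, `V₁*`, `V₂*`, `V₂^π` in turn, and greediness makes the middle
one at most `gbsm`. With `D = ⨆ s', gbsm (f s') s'` and `e = ⨆ s, |V₁* s - V₁^π s|`, the largest
regret `X` thus satisfies `X ≤ 2 D + (1 + γ) e + γ X`.
-/

section FiniteExtrema

variable {ι κ : Type*} [Finite ι] [Finite κ] [Nonempty ι] [Nonempty κ]

lemma ciInf_le_iff_exists_of_finite {L : Type*} [ConditionallyCompleteLinearOrder L]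
    {u : ι → L} {r : L} : ⨅ i, u i ≤ r ↔ ∃ i, u i ≤ r := by
  refine ⟨fun h => ?_, fun ⟨i, hi⟩ => (Finite.ciInf_le u i).trans hi⟩
  obtain ⟨i, hi⟩ := exists_eq_ciInf_of_finite (f := u)
  exact ⟨i, hi.trans_le h⟩

lemma max_ciSup_ciInf_ciInf_ciSup_le_iff {L : Type*} [ConditionallyCompleteLinearOrder L]
    {c : ι → κ → L} {r : L} :
    max (⨆ i, ⨅ j, c i j) (⨅ i, ⨆ j, c i j) ≤ r ↔
      (∀ i, ∃ j, c i j ≤ r) ∧ ∃ i, ∀ j, c i j ≤ r := by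
  simp only [max_le_iff, ciSup_le_iff (Set.finite_range _).bddAbove,
    ciInf_le_iff_exists_of_finite]

lemma abs_ciSup_sub_ciSup_le {u : ι → ℝ} {v : κ → ℝ} {r : ℝ}
    (huv : ∀ i, ∃ j, |u i - v j| ≤ r) (hvu : ∀ j, ∃ i, |u i - v j| ≤ r) :
    |(⨆ i, u i) - ⨆ j, v j| ≤ r := by
  refine abs_sub_le_iff.2 ⟨sub_le_iff_le_add.2 (ciSup_le fun i => ?_),
    sub_le_iff_le_add.2 (ciSup_le fun j => ?_)⟩
  · obtain ⟨j, hj⟩ := huv i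
    linarith [(abs_le.1 hj).2, Finite.le_ciSup v j]
  · obtain ⟨i, hi⟩ := hvu j
    linarith [(abs_le.1 hi).1, Finite.le_ciSup u i]

end FiniteExtrema

lemma le_div_one_sub_of_forall_bound {ι : Type*} [Finite ι] {x : ι → ℝ} {b γ : ℝ} (hγ1 : γ < 1)
    (h : ∀ c, (∀ i, x i ≤ c) → ∀ i, x i ≤ b + γ * c) (i : ι) : x i ≤ b / (1 - γ) := by
  have : Nonempty ι := ⟨i⟩
  obtain ⟨m, hm⟩ := Finite.exists_max x
  have hmax : x m ≤ b + γ * x m := h (x m) hm m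
  exact (hm i).trans ((le_div_iff₀ (sub_pos.2 hγ1)).2 (by linarith))

section Wasserstein

variable {S T : Type*} [Fintype S] [Fintype T] {P : S → ℝ} {Q : T → ℝ}

/-- `lam` is a coupling (transport plan) of the vectors `P` and `Q`: these are the competitors in
the linear program `W1 P Q d`. -/
structure IsCoupling_s6 (P : S → ℝ) (Q : T → ℝ) (lam : S → T → ℝ) : Prop where
  nonneg : ∀ i j, 0 ≤ lam i j
  sum_snd : ∀ i, ∑ j, lam i j = P i
  sum_fst : ∀ j, ∑ i, lam i j = Q j

lemma isCoupling_mul (hP : P ∈ stdSimplex ℝ S) (hQ : Q ∈ stdSimplex ℝ T) :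
    IsCoupling_s6 P Q fun i j => P i * Q j where
  nonneg i j := mul_nonneg (hP.1 i) (hQ.1 j)
  sum_snd i := by rw [← Finset.mul_sum, hQ.2, mul_one]
  sum_fst j := by rw [← Finset.sum_mul, hP.2, one_mul]

lemma IsCoupling_s6.W1_le {lam : S → T → ℝ} (hlam : IsCoupling_s6 P Q lam) (d : S → T → ℝ) :
    W1 P Q d ≤ ∑ i, ∑ j, lam i j * d i j := by
  refine csInf_le ⟨∑ i, ∑ j, P i * -|d i j|, ?_⟩
    ⟨lam, hlam.nonneg, hlam.sum_snd, hlam.sum_fst, rfl⟩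
  rintro _ ⟨mu, hmu, hmuP, -, rfl⟩
  refine Finset.sum_le_sum fun i _ => Finset.sum_le_sum fun j _ => ?_
  have hmu_le : mu i j ≤ P i :=
    hmuP i ▸ Finset.single_le_sum (fun k _ => hmu i k) (Finset.mem_univ j)
  calc P i * -|d i j| ≤ mu i j * -|d i j| :=
        mul_le_mul_of_nonpos_right hmu_le (neg_nonpos.2 (abs_nonneg _))
    _ ≤ mu i j * d i j := mul_le_mul_of_nonneg_left (neg_abs_le _) (hmu i j)

lemma le_W1_s6 (hP : P ∈ stdSimplex ℝ S) (hQ : Q ∈ stdSimplex ℝ T) {d : S → T → ℝ} {c : ℝ}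
    (h : ∀ lam, IsCoupling_s6 P Q lam → c ≤ ∑ i, ∑ j, lam i j * d i j) : c ≤ W1 P Q d := by
  have hprod := isCoupling_mul hP hQ
  refine le_csInf ⟨_, _, hprod.nonneg, hprod.sum_snd, hprod.sum_fst, rfl⟩ ?_
  rintro _ ⟨lam, hlam, hlamP, hlamQ, rfl⟩
  exact h lam ⟨hlam, hlamP, hlamQ⟩

lemma W1_nonneg {d : S → T → ℝ} (hd : 0 ≤ d) : 0 ≤ W1 P Q d := by
  refine Real.sInf_nonneg ?_
  rintro _ ⟨lam, hlam, -, -, rfl⟩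
  exact Finset.sum_nonneg fun i _ => Finset.sum_nonneg fun j _ => mul_nonneg (hlam i j) (hd i j)

lemma W1_le_W1_add (hP : P ∈ stdSimplex ℝ S) (hQ : Q ∈ stdSimplex ℝ T) {d d' : S → T → ℝ}
    {ε : ℝ} (h : ∀ i j, d i j ≤ d' i j + ε) : W1 P Q d ≤ W1 P Q d' + ε := by
  rw [← sub_le_iff_le_add]
  refine le_W1_s6 hP hQ fun lam hlam => sub_le_iff_le_add.2 ?_
  calc W1 P Q d ≤ ∑ i, ∑ j, lam i j * d i j := hlam.W1_le d
    _ ≤ ∑ i, ∑ j, lam i j * (d' i j + ε) :=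
        Finset.sum_le_sum fun i _ => Finset.sum_le_sum fun j _ =>
          mul_le_mul_of_nonneg_left (h i j) (hlam.nonneg i j)
    _ = (∑ i, ∑ j, lam i j * d' i j) + ε := by
        simp only [mul_add, Finset.sum_add_distrib, ← Finset.sum_mul, hlam.sum_snd, hP.2, one_mul]

lemma IsCoupling_s6.sum_mul_sub {lam : S → T → ℝ} (hlam : IsCoupling_s6 P Q lam) (u : S → ℝ)
    (v : T → ℝ) :
    ∑ i, ∑ j, lam i j * (u i - v j) = ∑ i, P i * u i - ∑ j, Q j * v j := by
  simp only [mul_sub, Finset.sum_sub_distrib, ← Finset.sum_mul, hlam.sum_snd]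
  rw [Finset.sum_comm]
  simp only [← Finset.sum_mul, hlam.sum_fst]

lemma abs_sum_sub_sum_le_W1 (hP : P ∈ stdSimplex ℝ S) (hQ : Q ∈ stdSimplex ℝ T)
    {d : S → T → ℝ} {u : S → ℝ} {v : T → ℝ} (h : ∀ i j, |u i - v j| ≤ d i j) :
    |∑ i, P i * u i - ∑ j, Q j * v j| ≤ W1 P Q d := by
  refine le_W1_s6 hP hQ fun lam hlam => ?_
  rw [← hlam.sum_mul_sub]
  refine (Finset.abs_sum_le_sum_abs _ _).trans (Finset.sum_le_sum fun i _ =>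
    (Finset.abs_sum_le_sum_abs _ _).trans (Finset.sum_le_sum fun j _ => ?_))
  rw [abs_mul, abs_of_nonneg (hlam.nonneg i j)]
  exact mul_le_mul_of_nonneg_left (h i j) (hlam.nonneg i j)

lemma abs_sum_sub_sum_le_of_abs_sub_le (hP : P ∈ stdSimplex ℝ S) {u v : S → ℝ} {c : ℝ}
    (h : ∀ i, |u i - v i| ≤ c) : |∑ i, P i * u i - ∑ i, P i * v i| ≤ c := by
  simp only [← Finset.sum_sub_distrib, ← mul_sub]
  calc |∑ i, P i * (u i - v i)| ≤ ∑ i, P i * |u i - v i| := by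
        refine (Finset.abs_sum_le_sum_abs _ _).trans_eq (Finset.sum_congr rfl fun i _ => ?_)
        rw [abs_mul, abs_of_nonneg (hP.1 i)]
    _ ≤ ∑ i, P i * c :=
        Finset.sum_le_sum fun i _ => mul_le_mul_of_nonneg_left (h i) (hP.1 i)
    _ = c := by rw [← Finset.sum_mul, hP.2, one_mul]

end Wasserstein

section ActionValue

variable {S A : Type*} [Fintype S] [Fintype A]

namespace FinMDP

lemma P_mem_stdSimplex_s6 (M : FinMDP S A) (s : S) (a : A) : M.P s a ∈ stdSimplex ℝ S :=
  ⟨M.P_nonneg s a, M.P_sum s a⟩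

/-- The action value (`Q`-value) of `a` in state `s` when the continuation is worth `V`. -/
def actionValue (M : FinMDP S A) (γ : ℝ) (V : S → ℝ) (s : S) (a : A) : ℝ :=
  M.R s a + γ * ∑ t, M.P s a t * V t

/-- `V` solves the Bellman optimality equation; for `0 ≤ γ < 1` it is the optimal value `V*`. -/
def IsOptimalValue (M : FinMDP S A) (γ : ℝ) (V : S → ℝ) : Prop :=
  ∀ s, V s = ⨆ a, M.actionValue γ V s a

/-- `V` solves the Bellman equation of the deterministic policy `π`; for `0 ≤ γ < 1` it is the
value `V^π`. -/
def IsPolicyValue (M : FinMDP S A) (γ : ℝ) (π : S → A) (V : S → ℝ) : Prop :=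
  ∀ s, V s = M.actionValue γ V s (π s)

lemma abs_actionValue_sub_le (M : FinMDP S A) {γ : ℝ} (hγ0 : 0 ≤ γ) {V W : S → ℝ} {c : ℝ}
    (h : ∀ s, |V s - W s| ≤ c) (s : S) (a : A) :
    |M.actionValue γ V s a - M.actionValue γ W s a| ≤ γ * c := by
  rw [actionValue, actionValue, add_sub_add_left_eq_sub, ← mul_sub, abs_mul, abs_of_nonneg hγ0]
  exact mul_le_mul_of_nonneg_left
    (abs_sum_sub_sum_le_of_abs_sub_le (M.P_mem_stdSimplex_s6 s a) h) hγ0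

end FinMDP

end ActionValue

section BisimulationMetric

variable {S A T B : Type*} [Fintype S] [Fintype A] [Fintype T] [Fintype B]
  (M : FinMDP S A) (N : FinMDP T B) {γ : ℝ}

lemma gbsmDelta_nonneg (hγ0 : 0 ≤ γ) {d : S → T → ℝ} (hd : 0 ≤ d) (s : S) (a : A) (t : T)
    (b : B) : 0 ≤ gbsmDelta M N γ d s a t b :=
  add_nonneg (abs_nonneg _) (mul_nonneg hγ0 (W1_nonneg hd))

lemma gbsmDelta_le_add (hγ0 : 0 ≤ γ) {d d' : S → T → ℝ} {ε : ℝ}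
    (h : ∀ s t, d s t ≤ d' s t + ε) (s : S) (a : A) (t : T) (b : B) :
    gbsmDelta M N γ d s a t b ≤ gbsmDelta M N γ d' s a t b + γ * ε := by
  have hW := W1_le_W1_add (M.P_mem_stdSimplex_s6 s a) (N.P_mem_stdSimplex_s6 t b) h
  rw [gbsmDelta, gbsmDelta, add_assoc, ← mul_add]
  gcongr

lemma abs_actionValue_sub_le_gbsmDelta (hγ0 : 0 ≤ γ) {d : S → T → ℝ} {V : S → ℝ} {W : T → ℝ}
    (h : ∀ s t, |V s - W t| ≤ d s t) (s : S) (a : A) (t : T) (b : B) :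
    |M.actionValue γ V s a - N.actionValue γ W t b| ≤ gbsmDelta M N γ d s a t b := by
  have hW := abs_sum_sub_sum_le_W1 (M.P_mem_stdSimplex_s6 s a) (N.P_mem_stdSimplex_s6 t b) h
  rw [FinMDP.actionValue, FinMDP.actionValue, add_sub_add_comm, ← mul_sub]
  refine (abs_add_le _ _).trans ?_
  rw [abs_mul, abs_of_nonneg hγ0, gbsmDelta]
  gcongr

variable [Nonempty A] [Nonempty B]

lemma gbsmF_le_iff {d : S → T → ℝ} {s : S} {t : T} {r : ℝ} :
    gbsmF M N γ d s t ≤ r ↔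
      (∀ a, ∃ b, gbsmDelta M N γ d s a t b ≤ r) ∧ ∃ a, ∀ b, gbsmDelta M N γ d s a t b ≤ r :=
  max_ciSup_ciInf_ciInf_ciSup_le_iff

lemma gbsmF_nonneg (hγ0 : 0 ≤ γ) {d : S → T → ℝ} (hd : 0 ≤ d) : 0 ≤ gbsmF M N γ d := by
  intro s t
  obtain ⟨a, ha⟩ := ((gbsmF_le_iff M N).1 (le_refl (gbsmF M N γ d s t))).2
  exact (gbsmDelta_nonneg M N hγ0 hd s a t (Classical.arbitrary B)).trans (ha _)

lemma gbsmF_le_add (hγ0 : 0 ≤ γ) {d d' : S → T → ℝ} {ε : ℝ}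
    (h : ∀ s t, d s t ≤ d' s t + ε) (s : S) (t : T) :
    gbsmF M N γ d s t ≤ gbsmF M N γ d' s t + γ * ε := by
  obtain ⟨hmatch, a₀, ha₀⟩ := (gbsmF_le_iff M N).1 (le_refl (gbsmF M N γ d' s t))
  have hshift := gbsmDelta_le_add M N hγ0 h s
  refine (gbsmF_le_iff M N).2 ⟨fun a => ?_, a₀, fun b => ?_⟩
  · obtain ⟨b, hb⟩ := hmatch a
    exact ⟨b, (hshift a t b).trans (by gcongr)⟩
  · exact (hshift a₀ t b).trans (by gcongr; exact ha₀ b)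

lemma monotone_gbsmF (hγ0 : 0 ≤ γ) : Monotone (gbsmF M N γ) := fun d d' h s t => by
  simpa only [mul_zero, add_zero] using
    gbsmF_le_add M N hγ0 (ε := 0) (fun s t => (h s t).trans_eq (add_zero _).symm) s t

lemma contractingWith_gbsmF (hγ0 : 0 ≤ γ) (hγ1 : γ < 1) :
    ContractingWith ⟨γ, hγ0⟩ (gbsmF M N γ) := by
  refine ⟨hγ1, LipschitzWith.of_dist_le_mul fun d d' => ?_⟩
  have hdist (s : S) (t : T) : |d s t - d' s t| ≤ dist d d' :=
    (dist_le_pi_dist (d s) (d' s) t).trans (dist_le_pi_dist d d' s)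
  have hbound : 0 ≤ γ * dist d d' := mul_nonneg hγ0 dist_nonneg
  refine (dist_pi_le_iff hbound).2 fun s => (dist_pi_le_iff hbound).2 fun t => ?_
  refine abs_sub_le_iff.2 ⟨sub_le_iff_le_add'.2 (gbsmF_le_add M N hγ0 (fun s t => ?_) s t),
    sub_le_iff_le_add'.2 (gbsmF_le_add M N hγ0 (fun s t => ?_) s t)⟩
  · linarith [(abs_le.1 (hdist s t)).2]
  · linarith [(abs_le.1 (hdist s t)).1]

lemma gbsm_eq_fixedPoint (hγ0 : 0 ≤ γ) (hγ1 : γ < 1) :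
    gbsm M N γ = (contractingWith_gbsmF M N hγ0 hγ1).fixedPoint := by
  have hmono : Monotone fun n => (gbsmF M N γ)^[n] 0 :=
    (monotone_gbsmF M N hγ0).monotone_iterate_of_le_map (gbsmF_nonneg M N hγ0 le_rfl)
  have htendsto := (contractingWith_gbsmF M N hγ0 hγ1).tendsto_iterate_fixedPoint 0
  funext s t
  exact (isLUB_of_tendsto_atTop (fun _ _ hmn => hmono hmn s t)
    (tendsto_pi_nhds.1 (tendsto_pi_nhds.1 htendsto s) t)).ciSup_eq

lemma gbsmF_gbsm (hγ0 : 0 ≤ γ) (hγ1 : γ < 1) : gbsmF M N γ (gbsm M N γ) = gbsm M N γ := by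
  rw [gbsm_eq_fixedPoint M N hγ0 hγ1]
  exact (contractingWith_gbsmF M N hγ0 hγ1).fixedPoint_isFixedPt

end BisimulationMetric

section Transfer

variable {S A T B : Type*} [Fintype S] [Fintype A] [Fintype T] [Fintype B]
  {M : FinMDP S A} {N : FinMDP T B} {γ : ℝ} {d : S → T → ℝ}
  {Vstar Vpi : S → ℝ} {Wstar Wrho : T → ℝ}

lemma abs_optimalValue_sub_le [Nonempty A] [Nonempty B] (hγ0 : 0 ≤ γ) (hγ1 : γ < 1)
    (hd : gbsmF M N γ d ≤ d) (hV : M.IsOptimalValue γ Vstar) (hW : N.IsOptimalValue γ Wstar)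
    (s : S) (t : T) : |Vstar s - Wstar t| ≤ d s t := by
  suffices h : ∀ c, (∀ p : S × T, |Vstar p.1 - Wstar p.2| - d p.1 p.2 ≤ c) →
      ∀ p : S × T, |Vstar p.1 - Wstar p.2| - d p.1 p.2 ≤ 0 + γ * c by
    simpa only [zero_div, sub_nonpos] using le_div_one_sub_of_forall_bound hγ1 h (s, t)
  rintro c hc ⟨s, t⟩
  have hgap (a : A) (b : B) (hab : gbsmDelta M N γ d s a t b ≤ d s t) :
      |M.actionValue γ Vstar s a - N.actionValue γ Wstar t b| ≤ d s t + γ * c :=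
    calc _ ≤ gbsmDelta M N γ (fun s t => d s t + c) s a t b :=
          abs_actionValue_sub_le_gbsmDelta M N hγ0
            (fun s t => sub_le_iff_le_add'.1 (hc (s, t))) s a t b
      _ ≤ gbsmDelta M N γ d s a t b + γ * c :=
          gbsmDelta_le_add M N hγ0 (fun _ _ => le_rfl) s a t b
      _ ≤ d s t + γ * c := by gcongr
  obtain ⟨hmatch, a₀, ha₀⟩ := (gbsmF_le_iff M N).1 (hd s t)
  rw [zero_add, sub_le_iff_le_add', hV s, hW t]
  exact abs_ciSup_sub_ciSup_le (fun a => (hmatch a).imp (hgap a))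
    fun b => ⟨a₀, hgap a₀ b (ha₀ b)⟩

lemma abs_policyValue_sub_le {π : S → A} {ρ : T → B} {e c : ℝ} (hγ0 : 0 ≤ γ)
    (hopt : ∀ s t, |Vstar s - Wstar t| ≤ d s t)
    (hVpi : M.IsPolicyValue γ π Vpi) (hWrho : N.IsPolicyValue γ ρ Wrho)
    (he : ∀ s, |Vstar s - Vpi s| ≤ e) (hc : ∀ t, |Wstar t - Wrho t| ≤ c) (s : S) (t : T) :
    |Vpi s - Wrho t| ≤ gbsmDelta M N γ d s (π s) t (ρ t) + γ * e + γ * c := by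
  have hM := abs_le.1 (M.abs_actionValue_sub_le hγ0 he s (π s))
  have hN := abs_le.1 (N.abs_actionValue_sub_le hγ0 hc t (ρ t))
  have hMN := abs_le.1 (abs_actionValue_sub_le_gbsmDelta M N hγ0 hopt s (π s) t (ρ t))
  rw [hVpi s, hWrho t]
  exact abs_le.2 ⟨by linarith, by linarith⟩

lemma abs_optimalValue_sub_policyValue_le {π : S → A} {ρ : T → B} {e c : ℝ} (hγ0 : 0 ≤ γ)
    (hopt : ∀ s t, |Vstar s - Wstar t| ≤ d s t)
    (hVpi : M.IsPolicyValue γ π Vpi) (hWrho : N.IsPolicyValue γ ρ Wrho)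
    (he : ∀ s, |Vstar s - Vpi s| ≤ e) (hc : ∀ t, |Wstar t - Wrho t| ≤ c) {s : S} {t : T}
    (hδ : gbsmDelta M N γ d s (π s) t (ρ t) ≤ d s t) :
    |Wstar t - Wrho t| ≤ 2 * d s t + (1 + γ) * e + γ * c := by
  have hpolicy := abs_policyValue_sub_le hγ0 hopt hVpi hWrho he hc s t
  calc |Wstar t - Wrho t| ≤ |Wstar t - Vstar s| + |Vstar s - Vpi s| + |Vpi s - Wrho t| :=
        (abs_sub_le _ (Vpi s) _).trans (by gcongr; exact abs_sub_le _ _ _)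
    _ ≤ d s t + e + (d s t + γ * e + γ * c) := by
        gcongr
        · exact abs_sub_comm (Wstar t) (Vstar s) ▸ hopt s t
        · exact he s
        · exact hpolicy.trans (by gcongr)
    _ = 2 * d s t + (1 + γ) * e + γ * c := by ring

theorem policy_transfer_regret_bound_greedy_action_general [Nonempty A] [Nonempty T] [Nonempty B]
    (hγ0 : 0 ≤ γ) (hγ1 : γ < 1) {π : S → A} {ρ : T → B} {f : T → S}
    (hVstar : M.IsOptimalValue γ Vstar) (hWstar : N.IsOptimalValue γ Wstar)
    (hVpi : M.IsPolicyValue γ π Vpi) (hWrho : N.IsPolicyValue γ ρ Wrho)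
    (hρ : ∀ t, gbsmDelta M N γ (gbsm M N γ) (f t) (π (f t)) t (ρ t) =
      ⨅ b, gbsmDelta M N γ (gbsm M N γ) (f t) (π (f t)) t b) :
    (⨆ t, |Wstar t - Wrho t|) ≤
      2 / (1 - γ) * (⨆ t, gbsm M N γ (f t) t) + (1 + γ) / (1 - γ) * ⨆ s, |Vstar s - Vpi s| := by
  have hfix : gbsmF M N γ (gbsm M N γ) ≤ gbsm M N γ := (gbsmF_gbsm M N hγ0 hγ1).le
  have hopt := abs_optimalValue_sub_le hγ0 hγ1 hfix hVstar hWstar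
  have hδ (t : T) : gbsmDelta M N γ (gbsm M N γ) (f t) (π (f t)) t (ρ t) ≤ gbsm M N γ (f t) t :=
    (hρ t).trans_le (ciInf_le_iff_exists_of_finite.2 (((gbsmF_le_iff M N).1 (hfix _ _)).1 _))
  have hrec (c : ℝ) (hc : ∀ t, |Wstar t - Wrho t| ≤ c) (t : T) :
      |Wstar t - Wrho t| ≤
        2 * (⨆ t, gbsm M N γ (f t) t) + (1 + γ) * (⨆ s, |Vstar s - Vpi s|) + γ * c :=
    (abs_optimalValue_sub_policyValue_le hγ0 hopt hVpi hWrho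
      (Finite.le_ciSup fun s => |Vstar s - Vpi s|) hc (hδ t)).trans
        (by gcongr; exact Finite.le_ciSup (fun t => gbsm M N γ (f t) t) t)
  refine (ciSup_le (le_div_one_sub_of_forall_bound hγ1 hrec)).trans_eq ?_
  ring

end Transfer

/-- regret bound for policy transfer with a greedy action mapping. -/
theorem policy_transfer_regret_bound_greedy_action
    (M₁ : FinMDP S₁ A₁) (M₂ : FinMDP S₂ A₂) (γ Rbar : ℝ)
    (hγ0 : 0 ≤ γ) (hγ1 : γ < 1) (hRbar : 0 < Rbar)
    (hR₁ : ∀ s a, 0 ≤ M₁.R s a ∧ M₁.R s a ≤ Rbar)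
    (hR₂ : ∀ s a, 0 ≤ M₂.R s a ∧ M₂.R s a ≤ Rbar)
    (π : S₁ → A₁) (f : S₂ → S₁) (g : A₁ → A₂)
    (V₁star V₁pi : S₁ → ℝ) (V₂star V₂pi : S₂ → ℝ)
    (hV₁star : ∀ s, V₁star s = ⨆ a : A₁, (M₁.R s a + γ * ∑ t, M₁.P s a t * V₁star t))
    (hV₂star : ∀ s', V₂star s' = ⨆ a : A₂, (M₂.R s' a + γ * ∑ t, M₂.P s' a t * V₂star t))
    (hV₁pi : ∀ s, V₁pi s = M₁.R s (π s) + γ * ∑ t, M₁.P s (π s) t * V₁pi t)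
    (hV₂pi : ∀ s', V₂pi s' =
      M₂.R s' (g (π (f s'))) + γ * ∑ t, M₂.P s' (g (π (f s'))) t * V₂pi t)
    (hg : ∀ (s' : S₂) (a : A₁),
      gbsmDelta M₁ M₂ γ (gbsm M₁ M₂ γ) (f s') a s' (g a) =
        ⨅ a' : A₂, gbsmDelta M₁ M₂ γ (gbsm M₁ M₂ γ) (f s') a s' a') :
    (⨆ s' : S₂, |V₂star s' - V₂pi s'|) ≤
      2 / (1 - γ) * (⨆ s' : S₂, gbsm M₁ M₂ γ (f s') s') +
        (1 + γ) / (1 - γ) * ⨆ s : S₁, |V₁star s - V₁pi s| :=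
  policy_transfer_regret_bound_greedy_action_general hγ0 hγ1 hV₁star hV₂star hV₁pi hV₂pi
    fun s' => hg s' (π (f s'))

end
end
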